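/- Let X ⊆ ℝᵖ, γ₀ ∈ ℝˢ, r > 0, and let h : X × ℝˢ → ℝ be positive with h(x,γ₀) = 1 for all x ∈ X, twice continuously differentiable in γ on the ball B(γ₀,r) for every x ∈ X, and satisfying sup_{x∈X} ‖∇h(x,γ₀)‖ ≤ M₁ < ∞ and sup_{x∈X} sup_{γ∈B(γ₀,r)} ‖h''(x,γ)‖₂ ≤ M₂ < ∞, where ∇h and h'' denote the gradient and Hessian in γ and ‖·‖₂ is the spectral norm. Fix a design ξ with points x₁,…,x_k ∈ X and weights ξᵢ ≥ 0 summing to 1, and fix λ ∈ ℝˢ, λ ≠ 0. Then there exist a constant C > 0 and an integer N such that for all n ≥ N, setting γ₁ = γ₀ + λ/√n, | I₁₂(ξ;γ₁) − 1 − ζ(ξ,λ,γ₀)/n | ≤ C·‖λ‖³/n^{3/2}, i.e. I₁₂(ξ;γ₁) = 1 + ζ(ξ,λ,γ₀)/n + O(‖λ‖³/n^{3/2}). -/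

import Mathlib

open scoped BigOperators

/-!
Write `y = 1 + d + O(ε²)` with `d = O(ε)` for the values of the variance function, and let
`R(y, d) = log y - (y - 1) + d² / 2`; the logarithmic series gives `R(y, d) = O(ε³)`. The weighted
means `Σ wᵢ yᵢ` and `Σ wᵢ dᵢ` stand in the same relation to each other, and since the weights sum to
one, the linear terms cancel in

`I₁₂ - 1 - ζ = R(Σ wᵢ yᵢ, Σ wᵢ dᵢ) - Σ wᵢ R(yᵢ, dᵢ)`.

Taking `y = h(γ₀ + v)`, `d = Dh(γ₀) v` and `ε = ‖v‖` bounds the error by a multiple of `‖v‖³` that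
does not depend on the direction of `v`.
-/

open Asymptotics Filter Finset Topology

section Taylor

variable {𝕜 E F : Type*} [RCLike 𝕜] [NormedAddCommGroup E] [NormedSpace ℝ E] [NormedSpace 𝕜 E]
  [NormedAddCommGroup F] [NormedSpace 𝕜 F] {f : E → F} {a : E}

theorem isBigO_sub_sub_pow_succ_of_fderiv {φ : E →L[𝕜] F} {n : ℕ}
    (hf : ∀ᶠ y in 𝓝 a, DifferentiableAt 𝕜 f y)
    (hφ : (fun y ↦ fderiv 𝕜 f y - φ) =O[𝓝 a] fun y ↦ ‖y - a‖ ^ n) :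
    (fun y ↦ f y - f a - φ (y - a)) =O[𝓝 a] fun y ↦ ‖y - a‖ ^ (n + 1) := by
  obtain ⟨C, hC, hbound⟩ := hφ.exists_pos
  have hsegment : ∀ᶠ y in 𝓝 a, ∀ z ∈ segment ℝ a y,
      DifferentiableAt 𝕜 f z ∧ ‖fderiv 𝕜 f z - φ‖ ≤ C * ‖‖z - a‖ ^ n‖ := by
    simpa only [nhdsWithin_univ] using convex_univ.eventually_nhdsWithin_segment (Set.mem_univ a)
      (by simpa only [nhdsWithin_univ] using hf.and hbound.bound)
  refine .of_bound C ?_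
  filter_upwards [hsegment] with y hy
  have hderiv : ∀ z ∈ segment ℝ a y, ‖fderiv 𝕜 f z - φ‖ ≤ C * ‖y - a‖ ^ n := fun z hz ↦ by
    refine (hy z hz).2.trans ?_
    rw [norm_pow, norm_norm]
    gcongr
    exact norm_sub_le_of_mem_segment hz
  calc ‖f y - f a - φ (y - a)‖
      ≤ C * ‖y - a‖ ^ n * ‖y - a‖ :=
        (convex_segment a y).norm_image_sub_le_of_norm_fderiv_le' (fun z hz ↦ (hy z hz).1) hderiv
          (left_mem_segment ℝ a y) (right_mem_segment ℝ a y)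
    _ = C * ‖‖y - a‖ ^ (n + 1)‖ := by rw [norm_pow, norm_norm, pow_succ, mul_assoc]

theorem isBigO_sub_sub_fderiv_of_contDiffAt (hf : ContDiffAt 𝕜 2 f a) :
    (fun y ↦ f y - f a - fderiv 𝕜 f a (y - a)) =O[𝓝 a] fun y ↦ ‖y - a‖ ^ 2 := by
  have hdiff : ∀ᶠ y in 𝓝 a, DifferentiableAt 𝕜 f y :=
    (hf.eventually (by simp)).mono fun y hy ↦ hy.differentiableAt two_ne_zero
  have hfderiv : DifferentiableAt 𝕜 (fderiv 𝕜 f) a :=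
    (hf.fderiv_right (m := 1) one_add_one_eq_two.le).differentiableAt one_ne_zero
  exact isBigO_sub_sub_pow_succ_of_fderiv hdiff
    (by simpa only [pow_one] using hfderiv.isBigO_sub.norm_right)

end Taylor

section Log

theorem isBigO_sum_range_add_log_one_sub (n : ℕ) :
    (fun u : ℝ ↦ ∑ i ∈ range n, u ^ (i + 1) / (i + 1) + Real.log (1 - u))
      =O[𝓝 0] fun u ↦ u ^ (n + 1) := by
  refine .of_bound 2 ?_
  filter_upwards [Metric.ball_mem_nhds (0 : ℝ) one_half_pos] with u hu
  have habs : |u| < 1 / 2 := by simpa using hu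
  calc ‖∑ i ∈ range n, u ^ (i + 1) / (i + 1) + Real.log (1 - u)‖
      ≤ |u| ^ (n + 1) / (1 - |u|) := Real.abs_log_sub_add_sum_range_le (by linarith) n
    _ ≤ |u| ^ (n + 1) / (1 / 2) := by gcongr; linarith
    _ = 2 * ‖u ^ (n + 1)‖ := by rw [norm_pow, Real.norm_eq_abs]; ring

variable {α : Type*} {l : Filter α} {y d ε : α → ℝ}

theorem isBigO_log_sub_add_sq (hε : Tendsto ε l (𝓝 0)) (hd : d =O[l] ε)
    (hy : (fun t ↦ y t - 1 - d t) =O[l] fun t ↦ ε t ^ 2) :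
    (fun t ↦ Real.log (y t) - (y t - 1) + d t ^ 2 / 2) =O[l] fun t ↦ ε t ^ 3 := by
  have hsq : (fun t ↦ ε t ^ 2) =O[l] ε := by
    simpa [sq] using (hε.isBigO_one ℝ).mul (isBigO_refl ε l)
  have hy_sub_one : (fun t ↦ y t - 1) =O[l] ε := by
    simpa using (hy.trans hsq).add hd
  have hlog : (fun t ↦ Real.log (y t) - (y t - 1) + (y t - 1) ^ 2 / 2) =O[l] fun t ↦ ε t ^ 3 := by
    have hlim : Tendsto (fun t ↦ 1 - y t) l (𝓝 0) := by
      simpa using (hy_sub_one.trans_tendsto hε).neg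
    have hpow : (fun t ↦ (1 - y t) ^ 3) =O[l] fun t ↦ ε t ^ 3 := by
      simpa using hy_sub_one.neg_left.pow 3
    refine (((isBigO_sum_range_add_log_one_sub 2).comp_tendsto hlim).trans hpow).congr_left
      fun t ↦ ?_
    simp only [Function.comp_apply, sum_range_succ, sum_range_zero, sub_sub_cancel]
    push_cast
    ring
  have hsq_sub_sq : (fun t ↦ (y t - 1 - d t) * (y t - 1 + d t)) =O[l] fun t ↦ ε t ^ 3 := by
    simpa [pow_succ] using hy.mul (hy_sub_one.add hd)
  refine (hlog.sub (hsq_sub_sq.const_mul_left (1 / 2))).congr_left fun t ↦ ?_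
  ring

end Log

section Criterion

variable {ι : Type*} [Fintype ι]

/-- The KL-criterion `I₁₂` of the design with weights `w`, as a function of the values `y i` that
the variance function takes at the support points. -/
noncomputable def klCriterion (w y : ι → ℝ) : ℝ :=
  1 + Real.log (∑ i, w i * y i) - ∑ i, w i * Real.log (y i)

/-- The noncentrality parameter `ζ` of the design with weights `w`, as a function of the directional
derivatives `d i = λᵀ∇h(xᵢ; γ₀)` of the variance function at the support points. -/
noncomputable def noncentrality (w d : ι → ℝ) : ℝ :=
  (1 / 2) * ((∑ i, w i * d i ^ 2) - (∑ i, w i * d i) ^ 2)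

theorem noncentrality_smul (w d : ι → ℝ) (c : ℝ) :
    noncentrality w (c • d) = c ^ 2 * noncentrality w d := by
  simp only [noncentrality, Pi.smul_apply, smul_eq_mul, mul_pow, mul_left_comm _ c,
    mul_left_comm _ (c ^ 2), ← mul_sum, ← mul_sub]

variable {w : ι → ℝ}

theorem klCriterion_sub_one_sub_noncentrality (hw : ∑ i, w i = 1) (y d : ι → ℝ) :
    klCriterion w y - 1 - noncentrality w d =
      (Real.log (∑ i, w i * y i) - (∑ i, w i * y i - 1) + (∑ i, w i * d i) ^ 2 / 2) -
        ∑ i, w i * (Real.log (y i) - (y i - 1) + d i ^ 2 / 2) := by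
  simp only [klCriterion, noncentrality, mul_add, mul_sub, mul_one, mul_div_assoc', sum_add_distrib,
    sum_sub_distrib, ← sum_div, hw]
  ring

theorem isBigO_klCriterion_sub_one_sub_noncentrality {α : Type*} {l : Filter α} {ε : α → ℝ}
    {y d : ι → α → ℝ} (hw : ∑ i, w i = 1) (hε : Tendsto ε l (𝓝 0)) (hd : ∀ i, d i =O[l] ε)
    (hy : ∀ i, (fun t ↦ y i t - 1 - d i t) =O[l] fun t ↦ ε t ^ 2) :
    (fun t ↦ klCriterion w (y · t) - 1 - noncentrality w (d · t)) =O[l] fun t ↦ ε t ^ 3 := by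
  have hd_mean : (fun t ↦ ∑ i, w i * d i t) =O[l] ε :=
    .fun_sum fun i _ ↦ (hd i).const_mul_left (w i)
  have hy_mean : (fun t ↦ ∑ i, w i * y i t - 1 - ∑ i, w i * d i t) =O[l] fun t ↦ ε t ^ 2 := by
    refine (IsBigO.fun_sum fun i (_ : i ∈ univ) ↦ (hy i).const_mul_left (w i)).congr_left
      fun t ↦ ?_
    simp only [mul_sub, mul_one, sum_sub_distrib, hw]
  simp only [klCriterion_sub_one_sub_noncentrality hw]
  exact (isBigO_log_sub_add_sq hε hd_mean hy_mean).sub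
    (.fun_sum fun i _ ↦ (isBigO_log_sub_add_sq hε (hd i) (hy i)).const_mul_left (w i))

variable {E : Type*} [NormedAddCommGroup E] [NormedSpace ℝ E] {h : ι → E → ℝ} {γ₀ : E}

theorem isBigO_klCriterion_sub_one_sub_noncentrality_fderiv (hw : ∑ i, w i = 1)
    (hone : ∀ i, h i γ₀ = 1) (hsmooth : ∀ i, ContDiffAt ℝ 2 (h i) γ₀) :
    (fun v ↦ klCriterion w (fun i ↦ h i (γ₀ + v)) - 1 -
      noncentrality w (fun i ↦ fderiv ℝ (h i) γ₀ v)) =O[𝓝 0] fun v ↦ ‖v‖ ^ 3 := by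
  refine isBigO_klCriterion_sub_one_sub_noncentrality hw tendsto_norm_zero
    (fun i ↦ ((fderiv ℝ (h i) γ₀).isBigO_id _).norm_right) fun i ↦ ?_
  have hshift : Tendsto (γ₀ + ·) (𝓝 0) (𝓝 γ₀) := by
    simpa using (continuous_const_add γ₀).tendsto 0
  simpa [Function.comp_def, hone i] using
    (isBigO_sub_sub_fderiv_of_contDiffAt (hsmooth i)).comp_tendsto hshift

theorem stmt_4_general (hw : ∑ i, w i = 1) (hone : ∀ i, h i γ₀ = 1)
    (hsmooth : ∀ i, ContDiffAt ℝ 2 (h i) γ₀) :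
    ∃ C > 0, ∀ lam : E, ∃ N : ℕ, ∀ n : ℕ, N ≤ n →
      |klCriterion w (fun i ↦ h i (γ₀ + (√n)⁻¹ • lam)) - 1 -
          noncentrality w (fun i ↦ fderiv ℝ (h i) γ₀ lam) / n|
        ≤ C * ‖lam‖ ^ 3 / (n : ℝ) ^ ((3 : ℝ) / 2) := by
  obtain ⟨C, hC, hbound⟩ :=
    (isBigO_klCriterion_sub_one_sub_noncentrality_fderiv hw hone hsmooth).exists_pos
  refine ⟨C, hC, fun lam ↦ ?_⟩
  have hlim : Tendsto (fun n : ℕ ↦ (√n)⁻¹ • lam) atTop (𝓝 0) := by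
    simpa using ((tendsto_inv_atTop_zero.comp
      (Real.tendsto_sqrt_atTop.comp tendsto_natCast_atTop_atTop)).smul_const lam)
  obtain ⟨N, hN⟩ := eventually_atTop.1 (hlim.eventually hbound.bound)
  refine ⟨N, fun n hn ↦ ?_⟩
  have hscale : noncentrality w (fun i ↦ fderiv ℝ (h i) γ₀ ((√n)⁻¹ • lam)) =
      noncentrality w (fun i ↦ fderiv ℝ (h i) γ₀ lam) / n := by
    simp only [map_smul]
    refine (noncentrality_smul w (fun i ↦ fderiv ℝ (h i) γ₀ lam) _).trans ?_
    rw [inv_pow, Real.sq_sqrt n.cast_nonneg, inv_mul_eq_div]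
  have hpow : ‖‖(√n)⁻¹ • lam‖ ^ 3‖ = ‖lam‖ ^ 3 / (n : ℝ) ^ ((3 : ℝ) / 2) := by
    rw [norm_pow, norm_norm, norm_smul, norm_inv, Real.norm_of_nonneg (Real.sqrt_nonneg _),
      mul_pow, inv_pow, inv_mul_eq_div, Real.rpow_div_two_eq_sqrt _ n.cast_nonneg, Real.rpow_ofNat]
  simpa only [Real.norm_eq_abs, hscale, hpow, mul_div_assoc] using hN n hn

end Criterion

/-- First order approximation of the KL-criterion by the noncentrality parameter:
I₁₂(ξ;γ₀+λ/√n) = 1 + ζ(ξ,λ,γ₀)/n + O(‖λ‖³/n^{3/2}), for a fixed design ξ and λ ≠ 0. -/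
theorem stmt_4 (p s : ℕ) (X : Set (Fin p → ℝ))
    (γ₀ : EuclideanSpace ℝ (Fin s)) (r : ℝ) (hr : 0 < r)
    (h : (Fin p → ℝ) → EuclideanSpace ℝ (Fin s) → ℝ)
    (hpos : ∀ x ∈ X, ∀ γ, 0 < h x γ)
    (hone : ∀ x ∈ X, h x γ₀ = 1)
    (hsmooth : ∀ x ∈ X, ContDiffOn ℝ 2 (h x) (Metric.ball γ₀ r))
    (M₁ M₂ : ℝ)
    (hM₁ : ∀ x ∈ X, ‖fderiv ℝ (h x) γ₀‖ ≤ M₁)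
    (hM₂ : ∀ x ∈ X, ∀ γ ∈ Metric.ball γ₀ r, ‖fderiv ℝ (fun γ' => fderiv ℝ (h x) γ') γ‖ ≤ M₂)
    (k : ℕ) (x : Fin k → (Fin p → ℝ)) (hx : ∀ i, x i ∈ X)
    (w : Fin k → ℝ) (hw : ∀ i, 0 ≤ w i) (hw1 : ∑ i, w i = 1)
    (lam : EuclideanSpace ℝ (Fin s)) (hlam : lam ≠ 0) :
    ∃ C > 0, ∃ N : ℕ, ∀ n : ℕ, N ≤ n →
      |(1 + Real.log (∑ i, w i * h (x i) (γ₀ + (Real.sqrt n)⁻¹ • lam))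
          - ∑ i, w i * Real.log (h (x i) (γ₀ + (Real.sqrt n)⁻¹ • lam)))
        - 1
        - (1 / 2) * ((∑ i, w i * (fderiv ℝ (h (x i)) γ₀ lam) ^ 2)
            - (∑ i, w i * fderiv ℝ (h (x i)) γ₀ lam) ^ 2) / n|
      ≤ C * ‖lam‖ ^ 3 / (n : ℝ) ^ ((3 : ℝ) / 2) := by
  obtain ⟨C, hC, hbound⟩ := stmt_4_general hw1 (fun i ↦ hone _ (hx i))
    fun i ↦ (hsmooth _ (hx i)).contDiffAt (Metric.ball_mem_nhds γ₀ hr)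
  exact ⟨C, hC, hbound lam⟩
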